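/- The number of non-crossing partitions of {1, …, 2k} all of whose blocks have even size, having exactly b blocks, equals the Fuss–Narayana number F_{k,b} = (1/b) · binom(k−1, b−1) · binom(2k, b−1). -/

import Mathlib

open Finset

/-- A partition of `{1,…,m}` is non-crossing if there are no `a < b < c < d` with
`a, c` in one block and `b, d` in a different block. -/
def IsNonCrossing {m : ℕ} (P : Finpartition (Finset.univ : Finset (Fin m))) : Prop :=
  ∀ a b c d : Fin m, a < b → b < c → c < d →
    ∀ B ∈ P.parts, ∀ C ∈ P.parts, a ∈ B → c ∈ B → b ∈ C → d ∈ C → B = C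

/-!
Write the size of each block of a partition of `{1,…,m}` at its minimum and `0` elsewhere. Every
suffix of this word weighs at most its length, and the word determines a non-crossing partition:
the last nonzero letter `w i` opens the block formed by the first `w i` elements from `i` on, and
deleting that block leaves a word of the same kind. Appending a `0` turns these words into the
ballot words of length `m + 1` and weight `m`. By the cycle lemma these make up a proportion
`1 / (m + 1)` of all words of that length and weight, for any prescribed multiset of letters. It
remains to count the words with `b` nonzero letters, all divisible by `d`: divide the letters by
`d`, choose the support, and count compositions.
-/

section Words

/-- A word of natural numbers, read backwards, is a path with steps `1 - v i`; it is a ballot word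
if this path stays positive, i.e. every nonempty suffix weighs less than its length. -/
def IsBallotWord {N : ℕ} (v : Fin N → ℕ) : Prop :=
  ∀ j : Fin N, j + ∑ i with j ≤ i, v i < N

instance {N : ℕ} : DecidablePred (IsBallotWord (N := N)) := fun _ =>
  inferInstanceAs (Decidable (∀ _, _))

/-- The words of length `N` and weight `n` whose multiset of letters satisfies `p`. -/
def wordsOfWeight (N n : ℕ) (p : Multiset ℕ → Prop) [DecidablePred p] : Finset (Fin N → ℕ) :=
  {v ∈ piAntidiag univ n | p (univ.val.map v)}

variable {N n : ℕ} {p : Multiset ℕ → Prop} [DecidablePred p]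

lemma mem_wordsOfWeight {v : Fin N → ℕ} :
    v ∈ wordsOfWeight N n p ↔ ∑ i, v i = n ∧ p (univ.val.map v) := by
  simp [wordsOfWeight]

lemma isBallotWord_cons {t : ℕ} {u : Fin N → ℕ} :
    IsBallotWord (Fin.cons t u : Fin (N + 1) → ℕ) ↔ t + ∑ i, u i < N + 1 ∧ IsBallotWord u := by
  have suffix_succ (j : Fin N) :
      ∑ i with j.succ ≤ i, (Fin.cons t u : Fin (N + 1) → ℕ) i = ∑ i with j ≤ i, u i := by
    simp [sum_filter, Fin.sum_univ_succ]
  simp only [IsBallotWord, Fin.forall_fin_succ, suffix_succ, Fin.val_succ]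
  exact and_congr (by simp [Fin.sum_univ_succ]) (forall_congr' fun j => by omega)

lemma sum_wordsOfWeight_succ (g : (Fin (N + 1) → ℕ) → ℕ) :
    ∑ v ∈ wordsOfWeight (N + 1) n p, g v = ∑ a ∈ antidiagonal n,
      ∑ u ∈ wordsOfWeight N a.2 (fun s => p (a.1 ::ₘ s)), g (Fin.cons a.1 u) := by
  have letters_cons (t : ℕ) (u : Fin N → ℕ) :
      univ.val.map (Fin.cons t u : Fin (N + 1) → ℕ) = t ::ₘ univ.val.map u := by
    simp [Fin.univ_succ, Function.comp_def]
  rw [sum_sigma']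
  refine sum_nbij' (fun v => ⟨(v 0, ∑ i, Fin.tail v i), Fin.tail v⟩)
    (fun x => Fin.cons x.1.1 x.2) (fun v hv => ?_) ?_ (by simp) ?_ (by simp)
  · rw [mem_wordsOfWeight, ← Fin.cons_self_tail v, letters_cons, Fin.sum_univ_succ] at hv
    simpa [mem_wordsOfWeight] using hv
  · rintro ⟨⟨t, r⟩, u⟩ h
    rw [mem_sigma, HasAntidiagonal.mem_antidiagonal, mem_wordsOfWeight] at h
    rw [mem_wordsOfWeight, letters_cons, Fin.sum_univ_succ]
    simpa only [Fin.cons_zero, Fin.cons_succ, h.2.1] using ⟨h.1, h.2.2⟩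
  · rintro ⟨⟨t, r⟩, u⟩ h
    rw [mem_sigma, mem_wordsOfWeight] at h
    simp [h.2.1]

lemma mul_sum_wordsOfWeight_apply (i : Fin N) :
    N * ∑ v ∈ wordsOfWeight N n p, v i = n * #(wordsOfWeight N n p) := by
  have sum_apply_eq (j : Fin N) :
      ∑ v ∈ wordsOfWeight N n p, v j = ∑ v ∈ wordsOfWeight N n p, v i := by
    refine sum_equiv ((Equiv.swap i j).arrowCongr (Equiv.refl ℕ)) (fun v => ?_) (by simp)
    have letters_swap : univ.val.map (v ∘ Equiv.swap i j) = univ.val.map v := by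
      rw [← Multiset.map_map, Multiset.map_univ_val_equiv]
    have sum_swap : ∑ x, (v ∘ Equiv.swap i j) x = ∑ x, v x := Equiv.sum_comp _ v
    change _ ↔ v ∘ Equiv.swap i j ∈ wordsOfWeight N n p
    rw [mem_wordsOfWeight, mem_wordsOfWeight, sum_swap, letters_swap]
  calc N * ∑ v ∈ wordsOfWeight N n p, v i = ∑ j, ∑ v ∈ wordsOfWeight N n p, v j := by
        simp [sum_apply_eq]
    _ = ∑ v ∈ wordsOfWeight N n p, ∑ j, v j := sum_comm
    _ = n * #(wordsOfWeight N n p) := by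
        rw [sum_congr rfl fun v hv => (mem_wordsOfWeight.1 hv).1, sum_const, smul_eq_mul, mul_comm]

lemma card_isBallotWord_succ (hn : n ≤ N) :
    #{v ∈ wordsOfWeight (N + 1) n p | IsBallotWord v} = ∑ a ∈ antidiagonal n,
      #{u ∈ wordsOfWeight N a.2 (fun s => p (a.1 ::ₘ s)) | IsBallotWord u} := by
  simp only [card_filter, sum_wordsOfWeight_succ]
  refine sum_congr rfl fun a ha => sum_congr rfl fun u hu => if_congr ?_ rfl rfl
  rw [isBallotWord_cons, (mem_wordsOfWeight.1 hu).1, HasAntidiagonal.mem_antidiagonal.1 ha,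
    and_iff_right (Nat.lt_succ_of_le hn)]

lemma card_isBallotWord_eq_zero (hn : N < n) :
    #{v ∈ wordsOfWeight (N + 1) n p | IsBallotWord v} = 0 := by
  refine card_eq_zero.2 (filter_false_of_mem fun v hv hb => ?_)
  obtain ⟨hsum, -⟩ := mem_wordsOfWeight.1 hv
  have total_lt := hb 0
  simp only [Fin.val_zero, Fin.zero_le, filter_true, hsum] at total_lt
  omega

lemma isBallotWord_of_sum_eq_zero {v : Fin N → ℕ} (hv : ∑ i, v i = 0) : IsBallotWord v := by
  intro j
  have suffix_le := sum_le_univ_sum_of_nonneg (s := {i | j ≤ i}) (fun i => Nat.zero_le (v i))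
  omega

/-- The cycle lemma, with rotations replaced by an average: deleting the first letter `v 0` reduces
the count to words of length `N - 1`, and the mean of `v 0` is `n / N` since `wordsOfWeight` is
invariant under permuting positions. -/
theorem mul_card_isBallotWord (N n : ℕ) (p : Multiset ℕ → Prop) [DecidablePred p] :
    N * #{v ∈ wordsOfWeight N n p | IsBallotWord v} = (N - n) * #(wordsOfWeight N n p) := by
  induction N generalizing n p with
  | zero => simp
  | succ N ih =>
    rcases lt_or_ge N n with hn | hn
    · rw [card_isBallotWord_eq_zero hn, Nat.sub_eq_zero_of_le hn, mul_zero, zero_mul]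
    obtain ⟨e, rfl⟩ := Nat.exists_eq_add_of_le hn
    set W := wordsOfWeight (n + e + 1) n p
    have peel : (n + e) * #{v ∈ W | IsBallotWord v} = e * #W + ∑ v ∈ W, v 0 := by
      calc (n + e) * #{v ∈ W | IsBallotWord v}
          = ∑ a ∈ antidiagonal n, (n + e - a.2) *
              #(wordsOfWeight (n + e) a.2 fun s => p (a.1 ::ₘ s)) := by
            simp only [W, card_isBallotWord_succ hn, mul_sum, ih]
        _ = ∑ v ∈ W, (e + v 0) := by
            rw [sum_wordsOfWeight_succ]
            refine sum_congr rfl fun a ha => ?_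
            have sub_eq : n + e - a.2 = e + a.1 := by
              have := HasAntidiagonal.mem_antidiagonal.1 ha
              omega
            simp only [sub_eq, Fin.cons_zero, sum_const, smul_eq_mul, mul_comm]
        _ = e * #W + ∑ v ∈ W, v 0 := by
            rw [sum_add_distrib, sum_const, smul_eq_mul, mul_comm]
    have average : (n + e + 1) * ∑ v ∈ W, v 0 = n * #W := mul_sum_wordsOfWeight_apply 0
    rw [show n + e + 1 - n = e + 1 by omega]
    rcases Nat.eq_zero_or_pos (n + e) with h0 | hpos
    · obtain ⟨rfl, rfl⟩ := Nat.add_eq_zero_iff.1 h0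
      rw [filter_true_of_mem fun v hv => isBallotWord_of_sum_eq_zero (mem_wordsOfWeight.1 hv).1]
    · refine Nat.eq_of_mul_eq_mul_left hpos ?_
      linear_combination (n + e + 1) * peel + average

end Words

section PiAntidiag

variable {ι : Type*} [DecidableEq ι]

lemma card_piAntidiag (s : Finset ι) (n : ℕ) : #(piAntidiag s n) = (#s + n - 1).choose n := by
  simp [← card_finsuppAntidiag_nat_eq_choose, finsuppAntidiag]

lemma card_piAntidiag_ne_zero (t : Finset ι) (n : ℕ) :
    #{v ∈ piAntidiag t (n + #t) | ∀ i ∈ t, v i ≠ 0} = #(piAntidiag t n) := by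
  have sum_succ (u : ι → ℕ) : ∑ i ∈ t, (u i + 1) = ∑ i ∈ t, u i + #t := by
    simp [sum_add_distrib]
  refine card_nbij' (fun v i => v i - 1) (fun u i => if i ∈ t then u i + 1 else 0)
    (fun v hv => ?_) (fun u hu => ?_) (fun v hv => ?_) fun u hu => ?_
  · obtain ⟨hv, hpos⟩ := mem_filter.1 hv
    obtain ⟨hsum, hsupp⟩ := mem_piAntidiag.1 hv
    have pred_succ : ∀ i ∈ t, v i - 1 + 1 = v i := fun i hi => Nat.succ_pred (hpos i hi)
    refine mem_piAntidiag.2 ⟨?_, fun i hi => hsupp i fun h0 => hi (by simp [h0])⟩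
    exact Nat.add_right_cancel ((sum_succ _).symm.trans ((sum_congr rfl pred_succ).trans hsum))
  · obtain ⟨hsum, -⟩ := mem_piAntidiag.1 hu
    refine mem_filter.2 ⟨mem_piAntidiag.2 ⟨?_, by simp⟩, by simp⟩
    rw [sum_congr rfl fun i hi => if_pos hi, sum_succ, hsum]
  · obtain ⟨hv, hpos⟩ := mem_filter.1 hv
    ext i
    have := (mem_piAntidiag.1 hv).2 i
    grind
  · ext i
    have := (mem_piAntidiag.1 hu).2 i
    grind

lemma filter_piAntidiag_support_eq {s t : Finset ι} (hts : t ⊆ s) (n : ℕ) :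
    {v ∈ piAntidiag s n | {i ∈ s | v i ≠ 0} = t} = {v ∈ piAntidiag t n | ∀ i ∈ t, v i ≠ 0} := by
  ext v
  simp only [mem_filter, mem_piAntidiag]
  constructor
  · rintro ⟨⟨hsum, hsupp⟩, rfl⟩
    exact ⟨⟨by rwa [sum_filter_ne_zero], fun i hi => mem_filter.2 ⟨hsupp i hi, hi⟩⟩,
      fun i hi => (mem_filter.1 hi).2⟩
  · rintro ⟨⟨hsum, hsupp⟩, hpos⟩
    refine ⟨⟨?_, fun i hi => hts (hsupp i hi)⟩, ?_⟩
    · rw [← hsum]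
      exact (sum_subset hts fun i _ hi => not_not.1 (mt (hsupp i) hi)).symm
    · ext i
      exact mem_filter.trans ⟨fun h => hsupp i h.2, fun hi => ⟨hts hi, hpos i hi⟩⟩

lemma card_piAntidiag_support_eq {s t : Finset ι} (hts : t ⊆ s) (ht : t.Nonempty) (n : ℕ) :
    #{v ∈ piAntidiag s (n + 1) | {i ∈ s | v i ≠ 0} = t} = n.choose (#t - 1) := by
  have card_pos := ht.card_pos
  rw [filter_piAntidiag_support_eq hts]
  rcases lt_or_ge (n + 1) #t with hn | hn
  · rw [Nat.choose_eq_zero_of_lt (by omega), card_eq_zero, filter_eq_empty_iff]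
    intro v hv hpos
    have card_le := card_nsmul_le_sum t v 1 fun i hi => Nat.one_le_iff_ne_zero.2 (hpos i hi)
    rw [(mem_piAntidiag.1 hv).1, smul_eq_mul, mul_one] at card_le
    exact hn.not_ge card_le
  obtain ⟨r, hr⟩ := Nat.exists_eq_add_of_le' hn
  have hn : n = r + (#t - 1) := by omega
  rw [hr, card_piAntidiag_ne_zero, card_piAntidiag, add_comm, Nat.add_sub_assoc card_pos, hn,
    Nat.choose_symm_add]

lemma card_piAntidiag_card_support_eq (s : Finset ι) (n b : ℕ) :
    #{v ∈ piAntidiag s (n + 1) | #{i ∈ s | v i ≠ 0} = b + 1}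
      = (#s).choose (b + 1) * n.choose b := by
  rw [card_eq_sum_card_fiberwise (f := fun v => {i ∈ s | v i ≠ 0}) (t := powersetCard (b + 1) s),
    ← card_powersetCard, ← smul_eq_mul, ← sum_const]
  · refine sum_congr rfl fun t ht => ?_
    obtain ⟨hts, hcard⟩ := mem_powersetCard.1 ht
    have filter_eq : {v ∈ {v ∈ piAntidiag s (n + 1) | #{i ∈ s | v i ≠ 0} = b + 1} |
        {i ∈ s | v i ≠ 0} = t} = {v ∈ piAntidiag s (n + 1) | {i ∈ s | v i ≠ 0} = t} := by
      rw [filter_filter]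
      exact filter_congr fun v _ => and_iff_right_of_imp fun h => h ▸ hcard
    rw [filter_eq, card_piAntidiag_support_eq hts (card_pos.1 (by omega)), hcard,
      Nat.add_sub_cancel]
  · intro v hv
    exact mem_powersetCard.2 ⟨filter_subset _ _, (mem_filter.1 hv).2⟩

lemma card_piAntidiag_dvd_card_support_eq {d : ℕ} (hd : d ≠ 0) (s : Finset ι) (n b : ℕ) :
    #{v ∈ piAntidiag s (d * (n + 1)) | (∀ i ∈ s, d ∣ v i) ∧ #{i ∈ s | v i ≠ 0} = b + 1}
      = (#s).choose (b + 1) * n.choose b := by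
  have support_mul (v : ι → ℕ) : {i ∈ s | (d • v) i ≠ 0} = {i ∈ s | v i ≠ 0} := by
    simp [hd]
  rw [← filter_filter, ← map_nsmul_piAntidiag _ _ hd, filter_map, card_map,
    ← card_piAntidiag_card_support_eq]
  simp only [Function.comp_def, Function.Embedding.coeFn_mk, support_mul]

end PiAntidiag

lemma parts_avoid_of_mem {α : Type*} [GeneralizedBooleanAlgebra α] [DecidableEq α] {a b : α}
    {P : Finpartition a} (hb : b ∈ P.parts) : (P.avoid b).parts = P.parts.erase b := by
  have sdiff_eq {c : α} (hc : c ∈ P.parts) (hcb : c ≠ b) : c \ b = c :=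
    (P.disjoint hc hb hcb).sdiff_eq_left
  ext c
  rw [P.mem_avoid, mem_erase]
  constructor
  · rintro ⟨d, hd, hdb, rfl⟩
    have hne : d ≠ b := fun h => hdb h.le
    rw [sdiff_eq hd hne]
    exact ⟨hne, hd⟩
  · rintro ⟨hne, hc⟩
    refine ⟨c, hc, fun hcb => ?_, sdiff_eq hc hne⟩
    exact P.ne_bot hc ((P.disjoint hc hb hne).eq_bot_of_le hcb)

section Opener

variable {α : Type*} [LinearOrder α] {S T B C : Finset α} {F G : Finset (Finset α)} {i : α}

lemma eq_of_isRelLowerSet_of_card_eq (hB : IsRelLowerSet (B : Set α) (· ∈ T))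
    (hC : IsRelLowerSet (C : Set α) (· ∈ T)) (h : #B = #C) : B = C := by
  by_cases hsub : B ⊆ C
  · exact eq_of_subset_of_card_le hsub h.ge
  obtain ⟨x, hxB, hxC⟩ := not_subset.1 hsub
  refine (eq_of_subset_of_card_le (fun y hy => ?_) h.le).symm
  rcases le_total x y with hxy | hyx
  · exact absurd (hC.mem_of_le hy hxy (hB.prop_of_mem hxB)) hxC
  · exact hB.mem_of_le hxB hyx (hC.prop_of_mem hy)

lemma exists_isRelLowerSet_card_eq (T : Finset α) {n : ℕ} (hn : n ≤ #T) :
    ∃ B : Finset α, IsRelLowerSet (B : Set α) (· ∈ T) ∧ #B = n := by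
  induction T using Finset.induction_on_max with
  | empty => exact ⟨∅, by simpa [eq_comm] using hn⟩
  | insert a T ha ih =>
    have haT : a ∉ T := fun h => lt_irrefl a (ha a h)
    rw [card_insert_of_notMem haT] at hn
    rcases hn.eq_or_lt with rfl | hn
    · exact ⟨insert a T, isRelLowerSet_self, card_insert_of_notMem haT⟩
    · obtain ⟨B, hB, hBn⟩ := ih (Nat.lt_succ_iff.1 hn)
      refine ⟨B, fun y hy => ⟨mem_insert_of_mem (hB.prop_of_mem hy), fun x hxy hx => ?_⟩, hBn⟩
      have hxa : x ≠ a := (hxy.trans_lt (ha y (hB.prop_of_mem hy))).ne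
      exact hB.mem_of_le hy hxy (mem_of_mem_insert_of_ne hx hxa)

/-- The set family form of `IsNonCrossing`: no two distinct members of `F` cross. -/
def IsNonCrossingFamily (F : Finset (Finset α)) : Prop :=
  ∀ a b c d : α, a < b → b < c → c < d →
    ∀ B ∈ F, ∀ C ∈ F, a ∈ B → c ∈ B → b ∈ C → d ∈ C → B = C

lemma IsNonCrossingFamily.mono (hG : IsNonCrossingFamily G) (h : F ⊆ G) : IsNonCrossingFamily F :=
  fun a b c d hab hbc hcd B hB C hC => hG a b c d hab hbc hcd B (h hB) C (h hC)

lemma IsNonCrossingFamily.insert {P : Finpartition (S \ B)} (hP : IsNonCrossingFamily P.parts)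
    (hB : IsRelLowerSet (B : Set α) (· ∈ {x ∈ S | i ≤ x})) :
    IsNonCrossingFamily (insert B P.parts) := by
  have notMem {x y z : α} {C : Finset α} (hC : C ∈ P.parts) (hx : x ∈ B) (hy : y ∈ C) (hz : z ∈ B)
      (hxy : x < y) (hyz : y < z) : False := by
    obtain ⟨hyS, hyB⟩ := mem_sdiff.1 (P.le hC hy)
    have hix : i ≤ x := (mem_filter.1 (hB.prop_of_mem hx)).2
    exact hyB (hB.mem_of_le hz hyz.le (mem_filter.2 ⟨hyS, hix.trans hxy.le⟩))
  intro a b c d hab hbc hcd X hX Y hY haX hcX hbY hdY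
  rcases mem_insert.1 hX with rfl | hX <;> rcases mem_insert.1 hY with rfl | hY
  · rfl
  · exact (notMem hY haX hbY hcX hab hbc).elim
  · exact (notMem hX hbY hcX hdY hbc hcd).elim
  · exact hP a b c d hab hbc hcd X hX Y hY haX hcX hbY hdY

/-- The word recording, at the minimum of each block of `F`, the size of that block, and `0`
elsewhere. -/
def openerWord (F : Finset (Finset α)) (i : α) : ℕ :=
  ∑ B ∈ F with B.min = (i : WithTop α), #B

lemma sum_openerWord (F : Finset (Finset α)) (T : Finset α) :
    ∑ x ∈ T, openerWord F x = ∑ B ∈ F with ∃ x ∈ T, B.min = (x : WithTop α), #B := by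
  have sum_minima (B : Finset α) : ∑ x ∈ T, (if B.min = (x : WithTop α) then #B else 0) =
      if ∃ x ∈ T, B.min = (x : WithTop α) then #B else 0 := by
    split_ifs with h
    · obtain ⟨x, hx, hBx⟩ := h
      simp [hBx, hx]
    · exact sum_eq_zero fun x hx => if_neg fun hBx => h ⟨x, hx, hBx⟩
  simp only [openerWord, sum_filter]
  rw [sum_comm]
  exact sum_congr rfl fun B _ => sum_minima B

lemma openerWord_insert (hB : B ∉ F) (hi : B.min = i) :
    openerWord (insert B F) = openerWord F + Pi.single i #B := by
  ext x
  rw [Pi.add_apply, openerWord, openerWord, sum_filter, sum_insert hB, sum_filter, add_comm, hi]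
  rcases eq_or_ne x i with rfl | hx
  · simp
  · simp [hx, hx.symm]

lemma openerWord_parts_of_mem (P : Finpartition S) (hB : B ∈ P.parts) (hi : B.min = i) :
    openerWord P.parts i = #B := by
  have filter_eq : {C ∈ P.parts | C.min = (i : WithTop α)} = {B} := by
    refine eq_singleton_iff_unique_mem.2 ⟨mem_filter.2 ⟨hB, hi⟩, fun C hC => ?_⟩
    obtain ⟨hC, hCi⟩ := mem_filter.1 hC
    exact P.eq_of_mem_parts hC hB (mem_of_min hCi) (mem_of_min hi)
  rw [openerWord, filter_eq, sum_singleton]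

lemma openerWord_parts_ne_zero_iff (P : Finpartition S) :
    openerWord P.parts i ≠ 0 ↔ ∃ B ∈ P.parts, B.min = i := by
  constructor
  · intro h
    obtain ⟨B, hB, -⟩ := exists_ne_zero_of_sum_ne_zero h
    exact ⟨B, mem_filter.1 hB⟩
  · rintro ⟨B, hB, hi⟩
    rw [openerWord_parts_of_mem P hB hi]
    exact (P.nonempty_of_mem_parts hB).card_ne_zero

lemma filter_map_openerWord_parts (P : Finpartition S) :
    (S.val.map (openerWord P.parts)).filter (· ≠ 0) = P.parts.val.map card := by
  rw [Multiset.filter_map]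
  refine (Multiset.map_eq_map_of_bij_of_nodup _ _ P.parts.nodup (S.nodup.filter _)
    (fun B hB => B.min' (P.nonempty_of_mem_parts hB)) ?_ ?_ ?_ ?_).symm
  · exact fun B hB => Multiset.mem_filter.2 ⟨P.le hB (min'_mem _ _),
      (openerWord_parts_ne_zero_iff P).2 ⟨B, hB, (coe_min' _).symm⟩⟩
  · exact fun B hB C hC h => P.eq_of_mem_parts hB hC (min'_mem B _) (h ▸ min'_mem C _)
  · intro x hx
    obtain ⟨B, hB, hBx⟩ := (openerWord_parts_ne_zero_iff P).1 (Multiset.mem_filter.1 hx).2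
    exact ⟨B, hB, WithTop.coe_injective ((coe_min' _).trans hBx)⟩
  · exact fun B hB => (openerWord_parts_of_mem P hB (coe_min' _).symm).symm

/-- Łukasiewicz words indexed by `S`: words of weight `#S`, vanishing outside `S`, all of whose
suffixes weigh at most their length. Suffixes are used instead of prefixes, so that deleting the
last block of a partition of `S` preserves the condition. -/
structure IsLukasiewicz (S : Finset α) (w : α → ℕ) : Prop where
  eq_zero : ∀ i ∉ S, w i = 0
  sum_eq : ∑ i ∈ S, w i = #S
  sum_le_card : ∀ j, ∑ x ∈ S with j ≤ x, w x ≤ #{x ∈ S | j ≤ x}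

lemma isLukasiewicz_openerWord_parts (P : Finpartition S) :
    IsLukasiewicz S (openerWord P.parts) := by
  refine ⟨fun i hi => ?_, ?_, fun j => ?_⟩
  · by_contra h
    obtain ⟨B, hB, hBi⟩ := (openerWord_parts_ne_zero_iff P).1 h
    exact hi (P.le hB (mem_of_min hBi))
  · rw [sum_openerWord, ← P.sum_card_parts, filter_true_of_mem]
    intro B hB
    obtain ⟨i, hi⟩ := min_of_nonempty (P.nonempty_of_mem_parts hB)
    exact ⟨i, P.le hB (mem_of_min hi), hi⟩
  · rw [sum_openerWord]
    refine (card_biUnion (t := id) fun B hB C hC =>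
      P.disjoint (mem_filter.1 hB).1 (mem_filter.1 hC).1).symm.trans_le (card_le_card ?_)
    refine biUnion_subset.2 fun B hB x hx => ?_
    obtain ⟨hBP, i, hi, hBi⟩ := mem_filter.1 hB
    exact mem_filter.2 ⟨P.le hBP hx, (mem_filter.1 hi).2.trans (min_le_of_eq hx hBi)⟩

lemma isRelLowerSet_of_isNonCrossingFamily {P : Finpartition S} (hP : IsNonCrossingFamily P.parts)
    (hB : B ∈ P.parts) (hi : B.min = i) (hmax : ∀ j, i < j → openerWord P.parts j = 0) :
    IsRelLowerSet (B : Set α) (· ∈ {x ∈ S | i ≤ x}) := by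
  intro y hy
  refine ⟨mem_filter.2 ⟨P.le hB hy, min_le_of_eq hy hi⟩, fun x hxy hx => ?_⟩
  obtain ⟨hxS, hix⟩ := mem_filter.1 hx
  obtain ⟨C, hC, hxC⟩ := P.exists_mem hxS
  obtain ⟨j, hj⟩ := min_of_nonempty (P.nonempty_of_mem_parts hC)
  have hji : j ≤ i := not_lt.1 fun hij =>
    (openerWord_parts_ne_zero_iff P).2 ⟨C, hC, hj⟩ (hmax j hij)
  have hiB := mem_of_min hi
  have hjC := mem_of_min hj
  rcases hix.eq_or_lt with rfl | hix
  · exact hiB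
  rcases hxy.eq_or_lt with rfl | hxy
  · exact hy
  rcases hji.eq_or_lt with rfl | hji
  · exact P.eq_of_mem_parts hB hC hiB hjC ▸ hxC
  · exact hP j i x y hji hix hxy C hC B hB hjC hxC hiB hy ▸ hxC

namespace IsLukasiewicz

variable {w : α → ℕ}

lemma exists_last (hw : IsLukasiewicz S w) (hS : S.Nonempty) :
    ∃ i ∈ S, w i ≠ 0 ∧ ∀ j, i < j → w j = 0 := by
  have hne : {x ∈ S | w x ≠ 0}.Nonempty := by
    obtain ⟨x, hx, hx0⟩ := exists_ne_zero_of_sum_ne_zero (hw.sum_eq.trans_ne hS.card_ne_zero)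
    exact ⟨x, mem_filter.2 ⟨hx, hx0⟩⟩
  obtain ⟨hiS, hi0⟩ := mem_filter.1 (max'_mem _ hne)
  refine ⟨_, hiS, hi0, fun j hij => ?_⟩
  by_contra hj0
  have hjS : j ∈ S := not_not.1 (mt (hw.eq_zero j) hj0)
  exact hij.not_ge (le_max' _ j (mem_filter.2 ⟨hjS, hj0⟩))

lemma apply_le_card (hw : IsLukasiewicz S w) (hi : i ∈ S) : w i ≤ #{x ∈ S | i ≤ x} :=
  (single_le_sum (f := w) (fun _ _ => Nat.zero_le _) (mem_filter.2 ⟨hi, le_rfl⟩)).trans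
    (hw.sum_le_card i)

lemma exists_add_single_eq (hw : IsLukasiewicz S w) (hS : S.Nonempty) :
    ∃ (i : α) (B : Finset α) (u : α → ℕ), B.min = i ∧
      IsRelLowerSet (B : Set α) (· ∈ {x ∈ S | i ≤ x}) ∧ (∀ x, i ≤ x → u x = 0) ∧
      u + Pi.single i #B = w := by
  obtain ⟨i, hiS, hi0, hmax⟩ := hw.exists_last hS
  obtain ⟨B, hB, hBcard⟩ := exists_isRelLowerSet_card_eq _ (hw.apply_le_card hiS)
  have le_of_mem : ∀ x ∈ B, i ≤ x := fun x hx => (mem_filter.1 (hB.prop_of_mem hx)).2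
  have hiB : i ∈ B := by
    obtain ⟨y, hy⟩ := card_ne_zero.1 (hBcard ▸ hi0)
    exact hB.mem_of_le hy (le_of_mem y hy) (mem_filter.2 ⟨hiS, le_rfl⟩)
  refine ⟨i, B, Function.update w i 0, le_antisymm (min_le hiB) ?_, hB, fun x hx => ?_, ?_⟩
  · exact Finset.le_min fun x hx => WithTop.coe_le_coe.2 (le_of_mem x hx)
  · rcases hx.eq_or_lt with rfl | hx
    · simp
    · simp [hx.ne', hmax x hx]
  · rw [hBcard]
    ext x
    rcases eq_or_ne x i with rfl | hx <;> simp [*]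

lemma sdiff (hw : IsLukasiewicz S (w + Pi.single i #B)) (hi : i ∈ B) (hBS : B ⊆ {x ∈ S | i ≤ x})
    (hzero : ∀ x, i ≤ x → w x = 0) : IsLukasiewicz (S \ B) w := by
  have hB : ∀ x ∈ B, x ∈ S ∧ i ≤ x := fun x hx => mem_filter.1 (hBS hx)
  have sum_add_single {T : Finset α} (hT : B ⊆ T) :
      ∑ x ∈ T, (w + Pi.single i #B : α → ℕ) x = ∑ x ∈ T \ B, w x + #B := by
    have sum_B : ∑ x ∈ B, w x = 0 := sum_eq_zero fun x hx => hzero x (hB x hx).2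
    simp [sum_add_distrib, hi, ← sum_sdiff hT, sum_B]
  refine ⟨fun x hx => ?_, ?_, fun j => ?_⟩
  · by_cases hxB : x ∈ B
    · exact hzero x (hB x hxB).2
    · exact (Nat.add_eq_zero_iff.1 (hw.eq_zero x fun hxS => hx (mem_sdiff.2 ⟨hxS, hxB⟩))).1
  · have hBS := hBS.trans (filter_subset _ _)
    have := hw.sum_eq
    rw [sum_add_single hBS, ← card_sdiff_add_card_eq_card hBS] at this
    exact Nat.add_right_cancel this
  · rcases le_or_gt j i with hj | hj
    · have hBj : B ⊆ {x ∈ S | j ≤ x} := hBS.trans (monotone_filter_right S fun x _ => hj.trans)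
      have filter_sdiff : {x ∈ S \ B | j ≤ x} = {x ∈ S | j ≤ x} \ B := by grind
      have := hw.sum_le_card j
      rw [sum_add_single hBj, ← card_sdiff_add_card_eq_card hBj, ← filter_sdiff] at this
      exact Nat.le_of_add_le_add_right this
    · rw [sum_eq_zero fun x hx => hzero x (hj.le.trans (mem_filter.1 hx).2)]
      exact Nat.zero_le _

end IsLukasiewicz

lemma mem_parts_of_openerWord_eq {P : Finpartition S} (hP : IsNonCrossingFamily P.parts)
    (hB : IsRelLowerSet (B : Set α) (· ∈ {x ∈ S | i ≤ x})) (hne : B.Nonempty) {u : α → ℕ}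
    (hu : ∀ x, i ≤ x → u x = 0) (hPu : openerWord P.parts = u + Pi.single i #B) :
    B ∈ P.parts := by
  have apply_eq : openerWord P.parts i = #B := by simp [hPu, hu]
  have last : ∀ j, i < j → openerWord P.parts j = 0 := fun j hj => by
    simp [hPu, hu j hj.le, hj.ne']
  obtain ⟨C, hC, hCi⟩ := (openerWord_parts_ne_zero_iff P).1 (apply_eq.trans_ne hne.card_ne_zero)
  have hBC : B = C := eq_of_isRelLowerSet_of_card_eq hB
    (isRelLowerSet_of_isNonCrossingFamily hP hC hCi last)
    (by rw [← apply_eq, openerWord_parts_of_mem P hC hCi])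
  exact hBC ▸ hC

theorem IsLukasiewicz.existsUnique_finpartition {w : α → ℕ} (hw : IsLukasiewicz S w) :
    ∃! P : Finpartition S, IsNonCrossingFamily P.parts ∧ openerWord P.parts = w := by
  induction S using Finset.strongInduction generalizing w with | H S ih => ?_
  rcases S.eq_empty_or_nonempty with rfl | hS
  · refine ⟨Finpartition.empty (Finset α), ⟨by simp [IsNonCrossingFamily], ?_⟩, fun P _ =>
      Subsingleton.elim (α := Finpartition (⊥ : Finset α)) _ _⟩
    ext i
    simp [openerWord, hw.eq_zero i]
  obtain ⟨i, B, u, hmin, hB, hu, rfl⟩ := hw.exists_add_single_eq hS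
  have hiB : i ∈ B := mem_of_min hmin
  have hBi : B ⊆ {x ∈ S | i ≤ x} := fun x hx => hB.prop_of_mem hx
  have hBS : B ⊆ S := hBi.trans (filter_subset _ _)
  have notMem_parts (P : Finpartition (S \ B)) : B ∉ P.parts := fun h =>
    (mem_sdiff.1 (P.le h hiB)).2 hiB
  obtain ⟨P, ⟨hP, hPu⟩, unique⟩ := ih (S \ B) (sdiff_ssubset hBS ⟨i, hiB⟩) (hw.sdiff hiB hBi hu)
  refine ⟨P.extend (ne_empty_of_mem hiB) sdiff_disjoint (sdiff_union_of_subset hBS),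
    ⟨hP.insert hB, ?_⟩, fun Q ⟨hQ, hQw⟩ => ?_⟩
  · rw [← hPu]
    exact openerWord_insert (notMem_parts P) hmin
  · have insert_avoid : insert B (Q.avoid B).parts = Q.parts := by
      have hBQ := mem_parts_of_openerWord_eq hQ hB ⟨i, hiB⟩ hu hQw
      rw [parts_avoid_of_mem hBQ, insert_erase hBQ]
    have avoid_eq : Q.avoid B = P := by
      refine unique _ ⟨hQ.mono (insert_avoid ▸ subset_insert _ _), ?_⟩
      rw [← insert_avoid, openerWord_insert (notMem_parts _) hmin] at hQw
      exact add_right_cancel hQw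
    ext1
    rw [← insert_avoid, avoid_eq]
    rfl

theorem card_isNonCrossingFamily_eq_card_isLukasiewicz (S : Finset α) (p : Multiset ℕ → Prop) :
    Nat.card {P : Finpartition S // IsNonCrossingFamily P.parts ∧ p (P.parts.val.map card)} =
      Nat.card {w : α → ℕ // IsLukasiewicz S w ∧ p ((S.val.map w).filter (· ≠ 0))} := by
  refine Nat.card_eq_of_bijective (fun P => ⟨openerWord P.1.parts,
    isLukasiewicz_openerWord_parts P.1, by
      rw [filter_map_openerWord_parts]
      exact P.2.2⟩) ⟨fun P Q hPQ => ?_, fun ⟨w, hw, hp⟩ => ?_⟩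
  · exact Subtype.ext ((isLukasiewicz_openerWord_parts P.1).existsUnique_finpartition.unique
      ⟨P.2.1, rfl⟩ ⟨Q.2.1, (congrArg Subtype.val hPQ).symm⟩)
  · obtain ⟨P, ⟨hP, rfl⟩, -⟩ := hw.existsUnique_finpartition
    rw [filter_map_openerWord_parts] at hp
    exact ⟨⟨P, hP, hp⟩, rfl⟩

end Opener

section Counting

variable {m : ℕ}

lemma isBallotWord_snoc_zero {w : Fin m → ℕ} :
    IsBallotWord (Fin.snoc w 0 : Fin (m + 1) → ℕ) ↔
      ∀ j : Fin m, ∑ i with j ≤ i, w i ≤ #{i : Fin m | j ≤ i} := by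
  have suffix_castSucc (j : Fin m) :
      ∑ i with j.castSucc ≤ i, (Fin.snoc w 0 : Fin (m + 1) → ℕ) i = ∑ i with j ≤ i, w i := by
    simp [sum_filter, Fin.sum_univ_castSucc]
  have suffix_last :
      ∑ i with Fin.last m ≤ i, (Fin.snoc w 0 : Fin (m + 1) → ℕ) i = 0 := by
    simp [Fin.last_le_iff, filter_eq']
  simp only [IsBallotWord, Fin.forall_fin_succ', suffix_castSucc, suffix_last]
  refine (and_iff_left (by simp)).trans (forall_congr' fun j => ?_)
  have card_suffix : #{i | j ≤ i} = m - j := by rw [filter_le_eq_Ici, Fin.card_Ici]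
  rw [card_suffix, Fin.val_castSucc]
  omega

lemma isLukasiewicz_univ_iff {w : Fin m → ℕ} : IsLukasiewicz univ w ↔
    ∑ i, w i = m ∧ IsBallotWord (Fin.snoc w 0 : Fin (m + 1) → ℕ) := by
  rw [isBallotWord_snoc_zero]
  exact ⟨fun h => ⟨h.sum_eq.trans (card_fin m), h.sum_le_card⟩,
    fun h => ⟨by simp, h.1.trans (card_fin m).symm, h.2⟩⟩

lemma apply_last_eq_zero_of_isBallotWord {v : Fin (m + 1) → ℕ} (hv : IsBallotWord v) :
    v (Fin.last m) = 0 := by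
  have suffix_lt := hv (Fin.last m)
  have apply_le := single_le_sum (f := v) (s := {i | Fin.last m ≤ i}) (fun _ _ => Nat.zero_le _)
    (mem_filter.2 ⟨mem_univ _, le_rfl⟩)
  rw [Fin.val_last] at suffix_lt
  omega

theorem card_isLukasiewicz_univ (p : Multiset ℕ → Prop) [DecidablePred p] :
    Nat.card {w : Fin m → ℕ // IsLukasiewicz univ w ∧ p ((univ.val.map w).filter (· ≠ 0))} =
      #{v ∈ wordsOfWeight (m + 1) m (fun M => p (M.filter (· ≠ 0))) | IsBallotWord v} := by
  have letters_snoc (w : Fin m → ℕ) :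
      (univ.val.map (Fin.snoc w 0 : Fin (m + 1) → ℕ)).filter (· ≠ 0) =
        (univ.val.map w).filter (· ≠ 0) := by
    simp [-Fin.univ_val_map, Fin.univ_castSuccEmb]
  have mem_iff (w : Fin m → ℕ) : IsLukasiewicz univ w ∧ p ((univ.val.map w).filter (· ≠ 0)) ↔
      (Fin.snoc w 0 : Fin (m + 1) → ℕ) ∈
        {v ∈ wordsOfWeight (m + 1) m fun M => p (M.filter (· ≠ 0)) | IsBallotWord v} := by
    rw [mem_filter, mem_wordsOfWeight, letters_snoc, Fin.sum_snoc, add_zero,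
      isLukasiewicz_univ_iff, and_right_comm]
  rw [← Nat.card_eq_finsetCard]
  refine Nat.card_eq_of_bijective (fun w => ⟨Fin.snoc w.1 0, (mem_iff w.1).1 w.2⟩)
    ⟨fun w u h => Subtype.ext ?_, fun ⟨v, hv⟩ => ?_⟩
  · have snoc_eq : (Fin.snoc w.1 0 : Fin (m + 1) → ℕ) = Fin.snoc u.1 0 := congrArg Subtype.val h
    exact (Fin.snoc_inj.1 snoc_eq).1
  · have snoc_init : Fin.snoc (Fin.init v) 0 = v := by
      rw [← apply_last_eq_zero_of_isBallotWord (mem_filter.1 hv).2, Fin.snoc_init_self]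
    exact ⟨⟨Fin.init v, (mem_iff _).2 (by rwa [snoc_init])⟩, Subtype.ext snoc_init⟩

theorem mul_card_isNonCrossing (m : ℕ) (p : Multiset ℕ → Prop) [DecidablePred p] :
    (m + 1) * Nat.card {P : Finpartition (univ : Finset (Fin m)) //
        IsNonCrossing P ∧ p (P.parts.val.map card)} =
      #{v ∈ piAntidiag (univ : Finset (Fin (m + 1))) m |
        p ((univ.val.map v).filter (· ≠ 0))} := by
  calc (m + 1) * Nat.card {P : Finpartition (univ : Finset (Fin m)) //
          IsNonCrossing P ∧ p (P.parts.val.map card)}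
      = (m + 1) * Nat.card {w : Fin m → ℕ //
          IsLukasiewicz univ w ∧ p ((univ.val.map w).filter (· ≠ 0))} :=
        congrArg _ (card_isNonCrossingFamily_eq_card_isLukasiewicz univ p)
    _ = #(wordsOfWeight (m + 1) m fun M => p (M.filter (· ≠ 0))) := by
        rw [card_isLukasiewicz_univ, mul_card_isBallotWord, Nat.add_sub_cancel_left, one_mul]

theorem mul_card_isNonCrossing_dvd {d : ℕ} (hd : d ≠ 0) (n b : ℕ) :
    (d * (n + 1) + 1) * Nat.card {P : Finpartition (univ : Finset (Fin (d * (n + 1)))) //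
        IsNonCrossing P ∧ (∀ B ∈ P.parts, d ∣ #B) ∧ #P.parts = b + 1} =
      (d * (n + 1) + 1).choose (b + 1) * n.choose b := by
  have letters_iff (v : Fin (d * (n + 1) + 1) → ℕ) :
      ((∀ t ∈ (univ.val.map v).filter (· ≠ 0), d ∣ t) ∧
        ((univ.val.map v).filter (· ≠ 0)).card = b + 1) ↔
      (∀ i ∈ univ, d ∣ v i) ∧ #{i | v i ≠ 0} = b + 1 := by
    rw [Multiset.filter_map, Multiset.card_map]
    refine and_congr_left' ⟨fun h i _ => ?_, fun h => ?_⟩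
    · rcases eq_or_ne (v i) 0 with hi | hi
      · exact hi ▸ dvd_zero d
      · exact h _ (Multiset.mem_map_of_mem v (Multiset.mem_filter.2 ⟨mem_univ_val i, hi⟩))
    · exact Multiset.forall_mem_map_iff.2 fun i _ => h i (mem_univ i)
  have to_words := mul_card_isNonCrossing (d * (n + 1)) fun M => (∀ t ∈ M, d ∣ t) ∧ M.card = b + 1
  simp only [Multiset.forall_mem_map_iff, Multiset.card_map, mem_val, card_val] at to_words
  have words := card_piAntidiag_dvd_card_support_eq hd (univ : Finset (Fin (d * (n + 1) + 1))) n b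
  rw [card_fin] at words
  rw [to_words, ← words]
  congr 1
  ext v
  simp only [mem_filter, letters_iff]

end Counting

theorem card_noncrossing_even_blocks_general (d k b : ℕ) (hd : 1 ≤ d) (hk : 1 ≤ k) (hb : 1 ≤ b) :
    (Nat.card {P : Finpartition (Finset.univ : Finset (Fin (d * k))) //
        IsNonCrossing P ∧ (∀ B ∈ P.parts, d ∣ B.card) ∧ P.parts.card = b} : ℚ)
      = (1 / b) * (k - 1).choose (b - 1) * (d * k).choose (b - 1) := by
  obtain ⟨k, rfl⟩ := Nat.exists_eq_add_of_le' hk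
  obtain ⟨b, rfl⟩ := Nat.exists_eq_add_of_le' hb
  have count := mul_card_isNonCrossing_dvd (Nat.one_le_iff_ne_zero.1 hd) k b
  have absorb := Nat.add_one_mul_choose_eq (d * (k + 1)) b
  have length_ne_zero : ((d * (k + 1) + 1 : ℕ) : ℚ) ≠ 0 := by positivity
  have blocks_ne_zero : ((b + 1 : ℕ) : ℚ) ≠ 0 := by positivity
  simp only [Nat.add_sub_cancel]
  rw [mul_assoc, one_div, eq_inv_mul_iff_mul_eq₀ blocks_ne_zero]
  refine mul_left_cancel₀ length_ne_zero ?_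
  norm_cast
  linear_combination (b + 1) * count - k.choose b * absorb

/-- The number of non-crossing partitions of `{1,…,2k}` into blocks of even size,
having exactly `b` blocks, is the Fuss–Narayana number
`F_{k,b} = (1/b)·binom(k−1,b−1)·binom(2k,b−1)`. -/
theorem card_noncrossing_even_blocks (k b : ℕ) (hk : 1 ≤ k) (hb : 1 ≤ b) :
    (Nat.card {P : Finpartition (Finset.univ : Finset (Fin (2 * k))) //
        IsNonCrossing P ∧ (∀ B ∈ P.parts, Even B.card) ∧ P.parts.card = b} : ℚ)
      = (1 / b) * (k - 1).choose (b - 1) * (2 * k).choose (b - 1) := by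
  simpa only [even_iff_two_dvd, Nat.cast_ofNat] using
    card_noncrossing_even_blocks_general 2 k b one_le_two hk hb
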